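/- The shifted cocycle identity holds in End((ℂ²)^{⊗3}): F^{(12)}(w) · F^{Δ,12}(w) = F^{(23)}(w q^{2H₁}) · F^{12,Δ}(w). (This is the image of the face-type shifted cocycle condition F^{(12)}(λ)·(Δ ⊗ id)F(λ) = F^{(23)}(λ + h^{(1)})·(id ⊗ Δ)F(λ) for the quantum group U_q(sl₂) under the tensor cube of its two-dimensional representation.) -/

import Mathlib

open Matrix
open scoped Kronecker

noncomputable section

/-- `e = E₁₂`. -/
def eM : Matrix (Fin 2) (Fin 2) ℂ := !![0, 1; 0, 0]

/-- `f = E₂₁`. -/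
def fM : Matrix (Fin 2) (Fin 2) ℂ := !![0, 0; 1, 0]

/-- `t = diag(q, q⁻¹)`. -/
def tM (q : ℂ) : Matrix (Fin 2) (Fin 2) ℂ := !![q, 0; 0, q⁻¹]

/-- `(n)_{q⁻²}! = ∏_{k=1}^n (1 - q^{-2k})/(1 - q^{-2})`. -/
def qfac (q : ℂ) (n : ℕ) : ℂ :=
  ∏ k ∈ Finset.Icc 1 n, ((1 - q⁻¹ ^ (2 * k)) / (1 - q⁻¹ ^ 2))

/-- The scalar coefficient `(q²u)^n (q - q⁻¹)^n / (n)_{q⁻²}!`. -/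
def coefF (q u : ℂ) (n : ℕ) : ℂ := (q ^ 2 * u) ^ n * (q - q⁻¹) ^ n / qfac q n

/-- The operator Pochhammer symbol `(q⁻²u X; q⁻²)_n = ∏_{k=0}^{n-1} (1 - u q^{-2k-2} X)`. -/
def pochOp {ι : Type*} [Fintype ι] [DecidableEq ι] (q u : ℂ) (X : Matrix ι ι ℂ)
    (n : ℕ) : Matrix ι ι ℂ :=
  (((List.range n).map fun k =>
    (1 : Matrix ι ι ℂ) - (u * q⁻¹ ^ (2 * k + 2)) • X)).prod

/-- The image `F(u)` of the `sl₂` face-type twistor on `ℂ² ⊗ ℂ²`. -/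
def F4 (q u : ℂ) : Matrix (Fin 2 × Fin 2) (Fin 2 × Fin 2) ℂ :=
  ∑' n : ℕ, coefF q u n •
    ((pochOp q u ((tM q * tM q) ⊗ₖ (1 : Matrix (Fin 2) (Fin 2) ℂ)) n)⁻¹ *
      (((eM * tM q) ^ n) ⊗ₖ ((tM q * fM) ^ n)))

/-- `Δ(et) = et ⊗ t + t² ⊗ et`. -/
def copEt (q : ℂ) : Matrix (Fin 2 × Fin 2) (Fin 2 × Fin 2) ℂ :=
  (eM * tM q) ⊗ₖ tM q + (tM q * tM q) ⊗ₖ (eM * tM q)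

/-- `Δ(tf) = tf ⊗ 1 + t ⊗ tf`. -/
def copTf (q : ℂ) : Matrix (Fin 2 × Fin 2) (Fin 2 × Fin 2) ℂ :=
  (tM q * fM) ⊗ₖ (1 : Matrix (Fin 2) (Fin 2) ℂ) + tM q ⊗ₖ (tM q * fM)

/-- `Δ(t²) = t² ⊗ t²`. -/
def copT2 (q : ℂ) : Matrix (Fin 2 × Fin 2) (Fin 2 × Fin 2) ℂ :=
  (tM q * tM q) ⊗ₖ (tM q * tM q)

/-- Reindexing `(ℂ² ⊗ ℂ²) ⊗ ℂ² ≅ ℂ² ⊗ (ℂ² ⊗ ℂ²)`. -/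
def reindexA (M : Matrix ((Fin 2 × Fin 2) × Fin 2) ((Fin 2 × Fin 2) × Fin 2) ℂ) :
    Matrix (Fin 2 × Fin 2 × Fin 2) (Fin 2 × Fin 2 × Fin 2) ℂ :=
  Matrix.reindex (Equiv.prodAssoc (Fin 2) (Fin 2) (Fin 2))
    (Equiv.prodAssoc (Fin 2) (Fin 2) (Fin 2)) M

/-- `F^{Δ,12}(u) = (Δ ⊗ id)(F)(u)` on `(ℂ²)^{⊗3}`. -/
def FcopLeft (q u : ℂ) : Matrix (Fin 2 × Fin 2 × Fin 2) (Fin 2 × Fin 2 × Fin 2) ℂ :=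
  ∑' n : ℕ, coefF q u n •
    ((pochOp q u (reindexA (copT2 q ⊗ₖ (1 : Matrix (Fin 2) (Fin 2) ℂ))) n)⁻¹ *
      reindexA ((copEt q ^ n) ⊗ₖ ((tM q * fM) ^ n)))

/-- `F^{12,Δ}(u) = (id ⊗ Δ)(F)(u)` on `(ℂ²)^{⊗3}`. -/
def FcopRight (q u : ℂ) : Matrix (Fin 2 × Fin 2 × Fin 2) (Fin 2 × Fin 2 × Fin 2) ℂ :=
  ∑' n : ℕ, coefF q u n •
    ((pochOp q u ((tM q * tM q) ⊗ₖ (1 : Matrix (Fin 2 × Fin 2) (Fin 2 × Fin 2) ℂ)) n)⁻¹ *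
      (((eM * tM q) ^ n) ⊗ₖ (copTf q ^ n)))

/-- `F^{(12)}(u) = F(u) ⊗ 1`. -/
def F12 (q u : ℂ) : Matrix (Fin 2 × Fin 2 × Fin 2) (Fin 2 × Fin 2 × Fin 2) ℂ :=
  reindexA (F4 q u ⊗ₖ (1 : Matrix (Fin 2) (Fin 2) ℂ))

/-- `F^{(23)}(u q^{2H₁})`, acting as `1 ⊗ F(u q^{2ε̂})` on `v_ε ⊗ x`. -/
def F23shift (q u : ℂ) : Matrix (Fin 2 × Fin 2 × Fin 2) (Fin 2 × Fin 2 × Fin 2) ℂ :=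
  Matrix.of fun a b =>
    if a.1 = b.1 then F4 q (u * q ^ (if a.1 = 0 then (2 : ℤ) else -2)) a.2 b.2 else 0

theorem inv_one_sub_diag {ι : Type*} [Fintype ι] [DecidableEq ι] (c : ℂ) (d : ι → ℂ)
    (h : ∀ i, 1 - c * d i ≠ 0) :
    ((1 : Matrix ι ι ℂ) - c • Matrix.diagonal d)⁻¹ = Matrix.diagonal fun i => (1 - c * d i)⁻¹ := by
  apply Matrix.inv_eq_right_inv
  rw [← Matrix.diagonal_one, ← Matrix.diagonal_smul, Matrix.diagonal_sub,
    Matrix.diagonal_mul_diagonal]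
  congr 1
  funext i
  exact mul_inv_cancel₀ (h i)

/-- Diagonal of `t²`. -/
def dT (q : ℂ) (i : Fin 2) : ℂ := if i = 0 then q ^ 2 else q⁻¹ ^ 2

theorem tt_diag (q : ℂ) : tM q * tM q = Matrix.diagonal (dT q) := by
  ext i j
  fin_cases i <;> fin_cases j <;> simp [tM, dT, Matrix.mul_apply] <;> ring

theorem et_eq (q : ℂ) : eM * tM q = !![0, q⁻¹; 0, 0] := by
  ext i j
  fin_cases i <;> fin_cases j <;> simp [tM, eM, Matrix.mul_apply]

theorem tf_eq (q : ℂ) : tM q * fM = !![0, 0; q⁻¹, 0] := by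
  ext i j
  fin_cases i <;> fin_cases j <;> simp [tM, fM, Matrix.mul_apply]

theorem et_pow (q : ℂ) (n : ℕ) (hn : 2 ≤ n) : (eM * tM q) ^ n = 0 := by
  obtain ⟨k, rfl⟩ := Nat.exists_eq_add_of_le hn
  have : (eM * tM q) ^ 2 = 0 := by
    rw [et_eq, pow_two]; ext i j
    fin_cases i <;> fin_cases j <;> simp [Matrix.mul_apply]
  rw [pow_add, this, zero_mul]

theorem tf_pow (q : ℂ) (n : ℕ) (hn : 2 ≤ n) : (tM q * fM) ^ n = 0 := by
  obtain ⟨k, rfl⟩ := Nat.exists_eq_add_of_le hn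
  have : (tM q * fM) ^ 2 = 0 := by
    rw [tf_eq, pow_two]; ext i j
    fin_cases i <;> fin_cases j <;> simp [Matrix.mul_apply]
  rw [pow_add, this, zero_mul]

theorem tsum_two {M : Type*} [AddCommMonoid M] [TopologicalSpace M] (g : ℕ → M)
    (h : ∀ n, 2 ≤ n → g n = 0) : ∑' n, g n = g 0 + g 1 := by
  rw [tsum_eq_sum (s := Finset.range 2), Finset.sum_range_succ, Finset.sum_range_one]
  intro n hn
  exact h n (Nat.not_lt.mp (fun hh => hn (Finset.mem_range.mpr hh)))

theorem coef_zero (q u : ℂ) : coefF q u 0 = 1 := by simp [coefF, qfac]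

theorem coef_one (q u : ℂ) (h : 1 - q⁻¹ ^ 2 ≠ 0) :
    coefF q u 1 = q ^ 2 * u * (q - q⁻¹) := by
  simp only [coefF, qfac, Finset.Icc_self, Finset.prod_singleton, mul_one, pow_one]
  rw [div_self h, div_one]

theorem poch_zero {ι : Type*} [Fintype ι] [DecidableEq ι] (q u : ℂ) (X : Matrix ι ι ℂ) :
    pochOp q u X 0 = 1 := by simp [pochOp]

theorem poch_one {ι : Type*} [Fintype ι] [DecidableEq ι] (q u : ℂ) (X : Matrix ι ι ℂ) :
    pochOp q u X 1 = 1 - (u * q⁻¹ ^ 2) • X := by simp [pochOp]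

theorem F4_eq (q u : ℂ) (h : 1 - q⁻¹ ^ 2 ≠ 0) (hd : ∀ i, 1 - u * q⁻¹ ^ 2 * dT q i ≠ 0) :
    F4 q u = 1 + (q ^ 2 * u * (q - q⁻¹)) •
      ((Matrix.diagonal fun a : Fin 2 × Fin 2 => (1 - u * q⁻¹ ^ 2 * dT q a.1)⁻¹) *
        ((eM * tM q) ⊗ₖ (tM q * fM))) := by
  rw [F4, tsum_two]
  · rw [coef_zero, coef_one q u h, poch_zero, poch_one, tt_diag, ← Matrix.diagonal_one (n := Fin 2),
      Matrix.diagonal_kronecker_diagonal, inv_one_sub_diag]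
    · simp
    · intro i; simpa using hd i.1
  · intro n hn
    simp [et_pow q n hn]

theorem FR_eq (q u : ℂ) (h : 1 - q⁻¹ ^ 2 ≠ 0) (hd : ∀ i, 1 - u * q⁻¹ ^ 2 * dT q i ≠ 0) :
    FcopRight q u = 1 + (q ^ 2 * u * (q - q⁻¹)) •
      ((Matrix.diagonal fun a : Fin 2 × Fin 2 × Fin 2 => (1 - u * q⁻¹ ^ 2 * dT q a.1)⁻¹) *
        ((eM * tM q) ⊗ₖ copTf q)) := by
  rw [FcopRight, tsum_two]
  · rw [coef_zero, coef_one q u h, poch_zero, poch_one, tt_diag, ← Matrix.diagonal_one (n := Fin 2 × Fin 2),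
      Matrix.diagonal_kronecker_diagonal, inv_one_sub_diag]
    · simp
    · intro i; simpa using hd i.1
  · intro n hn
    simp [et_pow q n hn]

theorem reindexA_diag (d : (Fin 2 × Fin 2) × Fin 2 → ℂ) :
    reindexA (Matrix.diagonal d) = Matrix.diagonal fun a => d ((a.1, a.2.1), a.2.2) := by
  ext a b
  simp [reindexA, Matrix.diagonal_apply, Prod.ext_iff, and_assoc]

theorem FL_eq (q u : ℂ) (h : 1 - q⁻¹ ^ 2 ≠ 0)
    (hd : ∀ i j, 1 - u * q⁻¹ ^ 2 * (dT q i * dT q j) ≠ 0) :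
    FcopLeft q u = 1 + (q ^ 2 * u * (q - q⁻¹)) •
      ((Matrix.diagonal fun a : Fin 2 × Fin 2 × Fin 2 =>
          (1 - u * q⁻¹ ^ 2 * (dT q a.1 * dT q a.2.1))⁻¹) *
        reindexA (copEt q ⊗ₖ (tM q * fM))) := by
  rw [FcopLeft, tsum_two]
  · rw [coef_zero, coef_one q u h, poch_zero, poch_one, copT2, tt_diag, 
      Matrix.diagonal_kronecker_diagonal, ← Matrix.diagonal_one (n := Fin 2),
      Matrix.diagonal_kronecker_diagonal, reindexA_diag, inv_one_sub_diag]
    · simp [reindexA]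
    · intro i; simpa using hd i.1 i.2.1
  · intro n hn
    simp [tf_pow q n hn, reindexA]

set_option maxHeartbeats 4000000 in
/-- The shifted cocycle identity
`F^{(12)}(w) F^{Δ,12}(w) = F^{(23)}(w q^{2H₁}) F^{12,Δ}(w)` holds in `End((ℂ²)^{⊗3})`. -/
theorem face_twistor_shifted_cocycle_sl2 (q w : ℂ) (hq : q ≠ 0)
    (hqroot : ∀ n : ℕ, n ≠ 0 → q ^ n ≠ 1)
    (hw : ∀ m : ℤ, w ≠ q ^ (2 * m)) :
    F12 q w * FcopLeft q w = F23shift q w * FcopRight q w := by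
  have hq' : (1 - q⁻¹ ^ 2 : ℂ) ≠ 0 := by
    intro h
    apply hqroot 2 (by norm_num)
    field_simp at h
    linear_combination h
  have key : ∀ m : ℤ, 1 - w * q ^ (2 * m) ≠ 0 := by
    intro m h
    apply hw (-m)
    rw [show 2 * -m = -(2 * m) by ring, _root_.zpow_neg]
    exact eq_inv_of_mul_eq_one_left (by linear_combination -h)
  have k0 : 1 - w ≠ 0 := by simpa using key 0
  have k1 : 1 - w * q ^ 2 ≠ 0 := by simpa using key 1
  have k2 : 1 - w * q⁻¹ ^ 2 ≠ 0 := by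
    have := key (-1)
    norm_num [_root_.zpow_neg] at this
    simpa using this
  have k4 : 1 - w * q⁻¹ ^ 4 ≠ 0 := by
    have := key (-2)
    norm_num [_root_.zpow_neg] at this
    simpa using this
  have k6 : 1 - w * q⁻¹ ^ 6 ≠ 0 := by
    have := key (-3)
    norm_num [_root_.zpow_neg] at this
    simpa using this
  have hz : q * q⁻¹ = 1 := mul_inv_cancel₀ hq
  have e1 : q ^ 2 * q⁻¹ ^ 2 = 1 := by rw [← mul_pow, hz, one_pow]
  have h0 : ∀ i, 1 - w * q⁻¹ ^ 2 * dT q i ≠ 0 := by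
    intro i
    fin_cases i <;> simp only [dT]
    · convert k0 using 1; simp; linear_combination w * e1
    · convert k4 using 1; simp; ring
  have hp : ∀ i, 1 - w * q ^ (2 : ℤ) * q⁻¹ ^ 2 * dT q i ≠ 0 := by
    intro i
    have e2 : q ^ (2 : ℤ) = q ^ 2 := by norm_cast
    rw [e2]
    fin_cases i <;> simp only [dT]
    · convert k1 using 1
      simp only [Fin.zero_eta, if_true]
      linear_combination -w * q ^ 2 * e1
    · convert k2 using 1
      simp only [Fin.mk_one, one_ne_zero, if_false]
      linear_combination -w * q⁻¹ ^ 2 * e1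
  have hm : ∀ i, 1 - w * q ^ (-2 : ℤ) * q⁻¹ ^ 2 * dT q i ≠ 0 := by
    intro i
    have e2 : q ^ (-2 : ℤ) = q⁻¹ ^ 2 := by rw [_root_.zpow_neg, inv_pow]; norm_cast
    rw [e2]
    fin_cases i <;> simp only [dT]
    · convert k2 using 1
      simp only [Fin.zero_eta, if_true]
      linear_combination -w * q⁻¹ ^ 2 * e1
    · convert k6 using 1
      simp only [Fin.mk_one, one_ne_zero, if_false]
      ring
  have hd : ∀ i j, 1 - w * q⁻¹ ^ 2 * (dT q i * dT q j) ≠ 0 := by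
    intro i j
    fin_cases i <;> fin_cases j <;>
      simp only [dT, Fin.zero_eta, if_true, Fin.mk_one, one_ne_zero, if_false]
    · convert k1 using 1
      linear_combination -w * q ^ 2 * e1
    · convert k2 using 1
      linear_combination -w * q⁻¹ ^ 2 * e1
    · convert k2 using 1
      linear_combination -w * q⁻¹ ^ 2 * e1
    · convert k6 using 1
      ring
  have h4 : ∀ i : Fin 2, F4 q (w * q ^ (if i = 0 then (2 : ℤ) else -2)) = _ := fun i =>
    F4_eq q _ hq' (by fin_cases i; exacts [hp, hm])
  rw [F12, FL_eq q w hq' hd, FR_eq q w hq' h0, F4_eq q w hq' h0]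
  have z2 : q ^ (2 : ℤ) = q ^ 2 := by norm_cast
  have z2' : q ^ (-2 : ℤ) = q⁻¹ ^ 2 := by rw [_root_.zpow_neg, inv_pow]; norm_cast
  ext ⟨a, b, c⟩ ⟨a', b', c'⟩
  rw [Matrix.mul_apply, Matrix.mul_apply]
  simp only [F23shift, h4, Fintype.sum_prod_type, Fin.sum_univ_two, reindexA,
    Matrix.reindex_apply, Matrix.submatrix_apply, Matrix.of_apply, Matrix.kroneckerMap_apply,
    Matrix.add_apply, Matrix.smul_apply, Matrix.diagonal_mul, copEt, copTf, et_eq, tf_eq, tt_diag,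
    Equiv.prodAssoc_symm_apply]
  fin_cases a <;> fin_cases b <;> fin_cases c <;> fin_cases a' <;> fin_cases b' <;> fin_cases c' <;>
    simp [dT, tM, Matrix.one_apply, z2, z2']
  all_goals
    have d1 : 1 - w * (q ^ 2)⁻¹ * (q ^ 2 * q ^ 2) = 1 - w * q ^ 2 := by field_simp
    have d2 : 1 - w * q ^ 2 * (q ^ 2)⁻¹ * q ^ 2 = 1 - w * q ^ 2 := by field_simp
    have d3 : 1 - w * (q ^ 2)⁻¹ * q ^ 2 = 1 - w := by field_simp
    have d4 : 1 - w * (q ^ 2)⁻¹ * (q ^ 2 * (q ^ 2)⁻¹) = (q ^ 2 - w) / q ^ 2 := by field_simp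
    have d5 : 1 - w * (q ^ 2)⁻¹ * ((q ^ 2)⁻¹ * q ^ 2) = (q ^ 2 - w) / q ^ 2 := by field_simp
    have d6 : 1 - w * (q ^ 2)⁻¹ * (q ^ 2)⁻¹ * q ^ 2 = (q ^ 2 - w) / q ^ 2 := by field_simp
    have k2' : q ^ 2 - w ≠ 0 := by
      intro h
      apply k2
      field_simp
      rw [h, mul_zero]
    have k1' : 1 - q ^ 2 * w ≠ 0 := by rwa [mul_comm]
    simp only [d1, d2, d3, d4, d5, d6]
    field_simp
    try ring

end
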